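/- Let a, b > 0, c ≥ 0, d ≥ a, let K be a positive integer and α ∈ (0,1) be such that αK and (1−α)K are positive integers and (1−α)K ≤ d/a, and set k₀ = d/a. Define r_k = 1/d for 1 ≤ k ≤ (1−α)K and r_k = 1/(a(k₀ + k − (1−α)K)) for (1−α)K < k ≤ K. Let (e_k)_{k=0}^{K} and (s_k)_{k=1}^{K} be nonnegative real sequences satisfying e_k ≤ (1 − a·r_k)·e_{k−1} − b·r_k·s_k + c·r_k² for all 1 ≤ k ≤ K. Then (b/(αK))·Σ_{k=(1−α)K+1}^{K} s_k ≤ (d/α)·e_0·exp(−a(1−α)K/d) + (c/(a·α·K))·(1 + log(1/(1−α))). -/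

import Mathlib

open Finset

/-!
During the first phase the error contracts by the factor `1 - a / d` at each step, so after `m`
steps it is at most `e 0 * exp (-a m / d)` plus the fixed point `c / (a d)` of the perturbed
contraction. In the suffix, of length `n`, dividing the recursion by the stepsize
`1 / (a (k₀ + k + 1))` gives the previous error the coefficient `a (k₀ + k + 1) - a = a (k₀ + k)`:
the error terms telescope, the `s k` all get the same weight `b`, and the noise adds up to `c / a`
times a harmonic sum, which is at most `log (1 + n / k₀) = log (1 + a n / d)`. This is at most
`log (1 / (1 - α))` when `(1 - α) K ≤ d / a`.
-/

theorem le_mul_exp_add_of_le_one_sub_mul_add {u : ℕ → ℝ} {q ε : ℝ} {n : ℕ}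
    (hq : 0 < q) (hq_one : q ≤ 1) (hε : 0 ≤ ε) (hu : 0 ≤ u 0)
    (h : ∀ k < n, u (k + 1) ≤ (1 - q) * u k + ε) :
    u n ≤ u 0 * Real.exp (-(q * n)) + ε / q := by
  have hcontract : ∀ k < n, u (k + 1) - ε / q ≤ (1 - q) * (u k - ε / q) := fun k hk => by
    have hfix : (1 - q) * (ε / q) + ε = ε / q := by field_simp; ring
    linarith [h k hk]
  have hpow : (1 - q) ^ n ≤ Real.exp (-(q * n)) :=
    calc (1 - q) ^ n ≤ Real.exp (-q) ^ n :=
          pow_le_pow_left₀ (sub_nonneg.2 hq_one) (Real.one_sub_le_exp_neg q) n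
      _ = Real.exp (-(q * n)) := by rw [← Real.exp_nat_mul]; ring_nf
  have hgeom : u n - ε / q ≤ u 0 * Real.exp (-(q * n)) :=
    calc u n - ε / q ≤ (1 - q) ^ n * (u 0 - ε / q) :=
          le_geom (u := fun k => u k - ε / q) (sub_nonneg.2 hq_one) n hcontract
      _ ≤ (1 - q) ^ n * u 0 :=
          mul_le_mul_of_nonneg_left (sub_le_self _ (by positivity))
            (pow_nonneg (sub_nonneg.2 hq_one) n)
      _ ≤ u 0 * Real.exp (-(q * n)) := by
          rw [mul_comm]; exact mul_le_mul_of_nonneg_left hpow hu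
  exact sub_le_iff_le_add.1 hgeom

theorem le_mul_exp_add_of_constant_step {a b c d : ℝ} (ha : 0 < a) (hb : 0 ≤ b) (hc : 0 ≤ c)
    (hd : a ≤ d) {r e s : ℕ → ℝ} {n : ℕ} (hr : ∀ k < n, r k = 1 / d) (he : 0 ≤ e 0)
    (hs : ∀ k < n, 0 ≤ s k)
    (hrec : ∀ k < n, e (k + 1) ≤ (1 - a * r k) * e k - b * r k * s k + c * r k ^ 2) :
    e n ≤ e 0 * Real.exp (-(a * n / d)) + c / (a * d) := by
  have hd_pos : 0 < d := ha.trans_le hd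
  have hcontract : ∀ k < n, e (k + 1) ≤ (1 - a / d) * e k + c / d ^ 2 := fun k hk => by
    have hgain : 0 ≤ b * (1 / d) * s k := mul_nonneg (by positivity) (hs k hk)
    calc e (k + 1) ≤ (1 - a * (1 / d)) * e k + c * (1 / d) ^ 2 := by
          rw [← hr k hk] at hgain ⊢; linarith [hrec k hk]
      _ = (1 - a / d) * e k + c / d ^ 2 := by ring
  calc e n ≤ e 0 * Real.exp (-(a / d * n)) + c / d ^ 2 / (a / d) :=
        le_mul_exp_add_of_le_one_sub_mul_add (div_pos ha hd_pos) ((div_le_one hd_pos).2 hd)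
          (by positivity) he hcontract
    _ = e 0 * Real.exp (-(a * n / d)) + c / (a * d) := by
        rw [div_mul_eq_mul_div a d]; field_simp

theorem sum_one_div_add_le_log {x : ℝ} (hx : 0 < x) (n : ℕ) :
    ∑ k ∈ range n, 1 / (x + ((k : ℝ) + 1)) ≤ Real.log (1 + n / x) := by
  have hterm (k : ℕ) : 1 / (x + ((k : ℝ) + 1)) ≤
      Real.log (x + ((k + 1 : ℕ) : ℝ)) - Real.log (x + k) := by
    have hk : 0 < x + k := by positivity
    have hk' : 0 < x + ((k : ℝ) + 1) := by positivity
    push_cast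
    calc 1 / (x + ((k : ℝ) + 1)) = 1 - ((x + ((k : ℝ) + 1)) / (x + k))⁻¹ := by field_simp; ring
      _ ≤ Real.log ((x + ((k : ℝ) + 1)) / (x + k)) :=
          Real.one_sub_inv_le_log_of_pos (div_pos hk' hk)
      _ = Real.log (x + ((k : ℝ) + 1)) - Real.log (x + k) := Real.log_div hk'.ne' hk.ne'
  calc ∑ k ∈ range n, 1 / (x + ((k : ℝ) + 1))
      ≤ ∑ k ∈ range n, (Real.log (x + ((k + 1 : ℕ) : ℝ)) - Real.log (x + k)) :=
        sum_le_sum fun k _ => hterm k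
    _ = Real.log (x + n) - Real.log x := by
        rw [sum_range_sub fun k : ℕ => Real.log (x + k), Nat.cast_zero, add_zero]
    _ = Real.log (1 + n / x) := by
        rw [← Real.log_div (by positivity) hx.ne', add_div, div_self hx.ne']

theorem sum_add_mul_le_of_harmonic_step {a b c k₀ : ℝ} (ha : 0 < a) (hc : 0 ≤ c) (hk₀ : 0 < k₀)
    {r e s : ℕ → ℝ} {n : ℕ} (hr : ∀ k < n, r k = 1 / (a * (k₀ + ((k : ℝ) + 1))))
    (hrec : ∀ k < n, e (k + 1) ≤ (1 - a * r k) * e k - b * r k * s k + c * r k ^ 2) :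
    b * ∑ k ∈ range n, s k + a * (k₀ + n) * e n ≤ a * k₀ * e 0 + c / a * Real.log (1 + n / k₀) := by
  have hstep : ∀ k < n, b * s k + (a * (k₀ + (k + 1 : ℕ)) * e (k + 1) - a * (k₀ + k) * e k) ≤
      c / a * (1 / (k₀ + ((k : ℝ) + 1))) := fun k hk => by
    have hw : 0 < a * (k₀ + ((k : ℝ) + 1)) := by positivity
    have hweighted := mul_le_mul_of_nonneg_left (hrec k hk) hw.le
    have hexpand : a * (k₀ + ((k : ℝ) + 1)) * ((1 - a * r k) * e k - b * r k * s k + c * r k ^ 2) =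
        a * (k₀ + k) * e k - b * s k + c / a * (1 / (k₀ + ((k : ℝ) + 1))) := by
      rw [hr k hk]; field_simp; ring
    push_cast
    linarith
  have htelescope := sum_le_sum fun k hk => hstep k (mem_range.1 hk)
  rw [sum_add_distrib, ← mul_sum, ← mul_sum,
    sum_range_sub fun k : ℕ => a * (k₀ + k) * e k, Nat.cast_zero, add_zero] at htelescope
  have hlog := mul_le_mul_of_nonneg_left (sum_one_div_add_le_log hk₀ n) (div_nonneg hc ha.le)
  linarith

theorem alpha_suffix_averaging_bound_general {a b c d : ℝ} (ha : 0 < a) (hb : 0 ≤ b) (hc : 0 ≤ c)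
    (hd : a ≤ d) {m n : ℕ} (hn : 0 < n) {r e s : ℕ → ℝ}
    (hr_const : ∀ k, 1 ≤ k → k ≤ m → r k = 1 / d)
    (hr_decay : ∀ k, m < k → k ≤ m + n → r k = 1 / (a * (d / a + (k : ℝ) - (m : ℝ))))
    (he_zero : 0 ≤ e 0) (he_last : 0 ≤ e (m + n)) (hs : ∀ k, 1 ≤ k → k ≤ m → 0 ≤ s k)
    (hrec : ∀ k, 1 ≤ k → k ≤ m + n →
      e k ≤ (1 - a * r k) * e (k - 1) - b * r k * s k + c * r k ^ 2) :
    b / n * ∑ k ∈ Icc (m + 1) (m + n), s k ≤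
      d / n * e 0 * Real.exp (-(a * m / d)) + c / (a * n) * (1 + Real.log (1 + a * n / d)) := by
  have hd_pos : 0 < d := ha.trans_le hd
  have hk₀ : 0 < d / a := div_pos hd_pos ha
  have hfirst : e m ≤ e 0 * Real.exp (-(a * m / d)) + c / (a * d) :=
    le_mul_exp_add_of_constant_step (r := fun k => r (k + 1)) (s := fun k => s (k + 1)) ha hb hc hd
      (fun k hk => hr_const (k + 1) (by lia) hk) he_zero (fun k hk => hs (k + 1) (by lia) hk)
      fun k hk => hrec (k + 1) (by lia) (by lia)
  have hr_suffix : ∀ k < n, r (m + k + 1) = 1 / (a * (d / a + ((k : ℝ) + 1))) := fun k hk => by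
    rw [hr_decay (m + k + 1) (by lia) (by lia)]
    push_cast
    ring_nf
  have hsuffix : b * ∑ k ∈ range n, s (m + k + 1) + a * (d / a + n) * e (m + n) ≤
      a * (d / a) * e m + c / a * Real.log (1 + n / (d / a)) :=
    sum_add_mul_le_of_harmonic_step (e := fun k => e (m + k)) ha hc hk₀ hr_suffix
      fun k hk => hrec (m + k + 1) (by lia) (by lia)
  have hreindex : ∑ k ∈ Icc (m + 1) (m + n), s k = ∑ k ∈ range n, s (m + k + 1) := by
    rw [← Ico_add_one_right_eq_Icc, sum_Ico_eq_sum_range]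
    simp [add_right_comm]
  have hlast : 0 ≤ a * (d / a + n) * e (m + n) := mul_nonneg (by positivity) he_last
  calc b / n * ∑ k ∈ Icc (m + 1) (m + n), s k
      = (b * ∑ k ∈ range n, s (m + k + 1)) / n := by rw [hreindex]; ring
    _ ≤ (a * (d / a) * e m + c / a * Real.log (1 + n / (d / a))) / n := by gcongr; linarith
    _ ≤ (a * (d / a) * (e 0 * Real.exp (-(a * m / d)) + c / (a * d)) +
          c / a * Real.log (1 + n / (d / a))) / n := by gcongr
    _ = d / n * e 0 * Real.exp (-(a * m / d)) + c / (a * n) * (1 + Real.log (1 + a * n / d)) := by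
      rw [div_div_eq_mul_div (n : ℝ), mul_comm (n : ℝ) a]
      field_simp
      ring

theorem one_add_mul_div_le_one_div_one_sub {a d x α : ℝ} (ha : 0 < a) (hd : 0 < d) (hα₀ : 0 ≤ α)
    (hα₁ : α < 1) (hx : (1 - α) * x ≤ d / a) :
    1 + a * (α * x) / d ≤ 1 / (1 - α) := by
  have hax : a * ((1 - α) * x) ≤ d := by rwa [le_div_iff₀' ha] at hx
  have hα : 0 < 1 - α := sub_pos.2 hα₁
  calc 1 + a * (α * x) / d = 1 + α / (1 - α) * (a * ((1 - α) * x) / d) := by field_simp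
    _ ≤ 1 + α / (1 - α) * 1 := by gcongr; exact (div_le_one hd).2 hax
    _ = 1 / (1 - α) := by field_simp; ring

/-- **α-suffix averaging recursion bound.**
With stepsizes `r_k = 1/d` during the first `(1-α)K` iterations and
`r_k = 1/(a(k₀ + k - (1-α)K))` (with `k₀ = d/a`) during the last `αK` iterations,
any nonnegative sequences satisfying `e_k ≤ (1 - a r_k) e_{k-1} - b r_k s_k + c r_k²`
obey `(b/(αK)) Σ_{suffix} s_k ≤ (d/α) e_0 exp(-a(1-α)K/d) + (c/(aαK))(1 + log(1/(1-α)))`. -/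
theorem alpha_suffix_averaging_bound
    (a b c d : ℝ) (ha : 0 < a) (hb : 0 < b) (hc : 0 ≤ c) (hd : a ≤ d)
    (K K1 K2 : ℕ) (α : ℝ) (hα0 : 0 < α) (hα1 : α < 1)
    (hK1 : (K1 : ℝ) = (1 - α) * K) (hK2 : (K2 : ℝ) = α * K)
    (hK1pos : 1 ≤ K1) (hK2pos : 1 ≤ K2) (hKsum : K = K1 + K2)
    (hK1le : (K1 : ℝ) ≤ d / a)
    (r : ℕ → ℝ)
    (hr1 : ∀ k, 1 ≤ k → k ≤ K1 → r k = 1 / d)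
    (hr2 : ∀ k, K1 < k → k ≤ K → r k = 1 / (a * (d / a + (k : ℝ) - (K1 : ℝ))))
    (e s : ℕ → ℝ)
    (he0 : ∀ k, k ≤ K → 0 ≤ e k) (hs0 : ∀ k, 1 ≤ k → k ≤ K → 0 ≤ s k)
    (hrec : ∀ k, 1 ≤ k → k ≤ K →
      e k ≤ (1 - a * r k) * e (k - 1) - b * r k * s k + c * r k ^ 2) :
    b / (α * K) * ∑ k ∈ Icc (K1 + 1) K, s k ≤
      d / α * e 0 * Real.exp (-(a * (1 - α) * K / d))
        + c / (a * α * K) * (1 + Real.log (1 / (1 - α))) := by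
  subst hKsum
  have hd_pos : 0 < d := ha.trans_le hd
  have hK : 1 ≤ ((K1 + K2 : ℕ) : ℝ) := by exact_mod_cast (by lia : 1 ≤ K1 + K2)
  have hlog : Real.log (1 + a * (α * (K1 + K2 : ℕ)) / d) ≤ Real.log (1 / (1 - α)) :=
    Real.log_le_log (by positivity)
      (one_add_mul_div_le_one_div_one_sub ha hd_pos hα0.le hα1 (hK1 ▸ hK1le))
  have he_nonneg : 0 ≤ e 0 := he0 0 (Nat.zero_le _)
  have hsharp := alpha_suffix_averaging_bound_general ha hb.le hc hd hK2pos hr1 hr2 he_nonneg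
    (he0 _ le_rfl) (fun k hk hkm => hs0 k hk (by lia)) hrec
  simp only [hK1, hK2, ← mul_assoc] at hsharp hlog
  refine hsharp.trans ?_
  gcongr
  exact le_mul_of_one_le_right hα0.le hK
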